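/- The set X = {x/2 : x ∈ BW16, ‖x‖² = 4} of normalized minimal vectors of the Barnes–Wall lattice BW16 is a subset of the unit sphere of ℝ^16 with exactly 4320 elements, and X is a spherical 7-design. -/

import Mathlib

noncomputable section

open scoped RealInnerProductSpace

/-- `ℝ^n` with the standard inner product. -/
abbrev E (n : ℕ) := EuclideanSpace ℝ (Fin n)

/-- The standard basis vector `ε i`. -/
def εv {n : ℕ} (i : Fin n) : E n := EuclideanSpace.single i 1

/-- The vector of `ℝ^n` with the given coordinates. -/
def vec {n : ℕ} (x : Fin n → ℝ) : E n := (WithLp.equiv 2 (Fin n → ℝ)).symm x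

/-- The vector of `ℝ^n` with the given integer coordinates. -/
def intVec {n : ℕ} (x : Fin n → ℤ) : E n := (WithLp.equiv 2 (Fin n → ℝ)).symm fun i => (x i : ℝ)

/-- A lattice is integral if all pairwise inner products of its elements are integers. -/
def LatticeIsIntegral {n : ℕ} (L : Submodule ℤ (E n)) : Prop :=
  ∀ x ∈ L, ∀ y ∈ L, ∃ k : ℤ, ⟪x, y⟫ = (k : ℝ)

/-- Two lattices are isometric if a linear isometry of the ambient space carries
one onto the other. -/
def IsometricLattices {n : ℕ} (L M : Submodule ℤ (E n)) : Prop :=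
  ∃ g : E n ≃ₗᵢ[ℝ] E n, g '' (L : Set (E n)) = (M : Set (E n))

def f0 : E 16 :=
  vec ![-1/2, 1/2, 1/2, 1/2, 1/2, 1/2, 1/2, 1/2, -1/2, 1/2, 1/2, 1/2, 1/2, 1/2, 1/2, 1/2]

def g1 : E 16 := εv 0 + εv 4 + εv 8 + εv 12
def g2 : E 16 := εv 0 + εv 2 + εv 4 + εv 6
def g3 : E 16 := εv 0 + εv 2 + εv 8 + εv 10
def g4 : E 16 := εv 0 + εv 2 + εv 12 + εv 14
def g5 : E 16 := εv 0 + εv 1 + εv 2 + εv 3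
def g6 : E 16 := εv 0 + εv 1 + εv 4 + εv 5
def g7 : E 16 := εv 0 + εv 1 + εv 6 + εv 7
def g8 : E 16 := εv 0 + εv 1 + εv 8 + εv 9
def g9 : E 16 := εv 0 + εv 1 + εv 10 + εv 11
def g10 : E 16 := εv 0 + εv 1 + εv 12 + εv 13
def g11 : E 16 := εv 0 + εv 1 + εv 14 + εv 15

/-- The Barnes-Wall lattice `BW₁₆ = ⟨2ε1, …, 2ε16, f0, g1, …, g11⟩`. -/
def BW16 : Submodule ℤ (E 16) :=
  Submodule.span ℤ ((Set.range fun i : Fin 16 => (2 : ℝ) • εv i) ∪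
    {f0, g1, g2, g3, g4, g5, g6, g7, g8, g9, g10, g11})

open MeasureTheory

/-- The uniform (rotation-invariant) probability measure on the unit sphere of `ℝ¹⁶`. -/
def sphereUniform : Measure (Metric.sphere (0 : E 16) 1) :=
  ((volume : Measure (E 16)).toSphere Set.univ)⁻¹ • (volume : Measure (E 16)).toSphere

/-- `X` is a spherical `t`-design: for every polynomial of total degree at most `t`,
the average over `X` equals the average over the sphere with respect to the
rotation-invariant probability measure. -/
def IsSphericalDesign (X : Set (E 16)) (t : ℕ) : Prop :=
  ∀ p : MvPolynomial (Fin 16) ℝ, p.totalDegree ≤ t →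
    (∑ᶠ x ∈ X, MvPolynomial.eval (fun i => x i) p) / (X.ncard : ℝ) =
      ∫ ξ, MvPolynomial.eval (fun i => (ξ : E 16) i) p ∂sphereUniform

/-- The set of normalized minimal vectors of `BW₁₆`. -/
def X18 : Set (E 16) := (fun x => (2 : ℝ)⁻¹ • x) '' {x ∈ (BW16 : Set (E 16)) | ‖x‖ ^ 2 = 4}

/-! ### The sphere side -/

/-- The map of the unit sphere induced by a linear isometry. -/
def sphMap (g : E 16 ≃ₗᵢ[ℝ] E 16) (x : Metric.sphere (0 : E 16) 1) : Metric.sphere (0 : E 16) 1 :=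
  ⟨g x, by simp⟩

lemma continuous_sphMap (g : E 16 ≃ₗᵢ[ℝ] E 16) : Continuous (sphMap g) :=
  Continuous.subtype_mk (g.continuous.comp continuous_subtype_val) _

open scoped Pointwise in
lemma map_sphMap (g : E 16 ≃ₗᵢ[ℝ] E 16) : sphereUniform.map (sphMap g) = sphereUniform := by
  have key : (volume : Measure (E 16)).toSphere.map (sphMap g)
      = (volume : Measure (E 16)).toSphere := by
    ext s hs
    have hm := (continuous_sphMap g).measurable
    rw [Measure.map_apply hm hs, Measure.toSphere_apply' _ (hm hs), Measure.toSphere_apply' _ hs]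
    congr 1
    have : (Set.Ioo (0 : ℝ) 1 • ((fun a : Metric.sphere (0 : E 16) 1 => (a : E 16)) ''
        (sphMap g ⁻¹' s))) = g ⁻¹' (Set.Ioo (0 : ℝ) 1 •
          ((fun a : Metric.sphere (0 : E 16) 1 => (a : E 16)) '' s)) := by
      ext x
      simp only [Set.mem_smul, Set.mem_image, Set.mem_preimage]
      constructor
      · rintro ⟨r, hr, _, ⟨y, hy, rfl⟩, rfl⟩
        exact ⟨r, hr, _, ⟨_, hy, rfl⟩, by simp [sphMap]⟩
      · rintro ⟨r, hr, _, ⟨y, hy, rfl⟩, h⟩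
        refine ⟨r, hr, _, ⟨sphMap g.symm y, ?_, rfl⟩, ?_⟩
        · have : sphMap g (sphMap g.symm y) = y := by ext1; simp [sphMap]
          rw [this]; exact hy
        · apply g.injective
          rw [← h]; simp [sphMap]
    rw [this]
    exact (g.measurePreserving.measure_preimage_equiv (f := g.toMeasurableEquiv) _)
  rw [sphereUniform, Measure.map_smul, key]

instance : IsProbabilityMeasure sphereUniform := by
  constructor
  rw [sphereUniform, Measure.smul_apply, smul_eq_mul]
  apply ENNReal.inv_mul_cancel
  · rw [Ne, Measure.measure_univ_eq_zero]
    exact Measure.toSphere_ne_zero _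
  · exact measure_ne_top _ _

lemma integral_sphMap (g : E 16 ≃ₗᵢ[ℝ] E 16) (f : E 16 → ℝ) (hf : Continuous f) :
    ∫ ξ : Metric.sphere (0 : E 16) 1, f (g ξ) ∂sphereUniform =
      ∫ ξ : Metric.sphere (0 : E 16) 1, f ξ ∂sphereUniform := by
  conv_rhs => rw [← map_sphMap g]
  rw [integral_map (continuous_sphMap g).measurable.aemeasurable]
  · rfl
  · exact (hf.comp continuous_subtype_val).aestronglyMeasurable

lemma continuous_evalE (p : MvPolynomial (Fin 16) ℝ) :
    Continuous fun x : E 16 => MvPolynomial.eval (fun i => x i) p := by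
  apply (MvPolynomial.continuous_eval p).comp
  fun_prop

lemma integrable_evalE (p : MvPolynomial (Fin 16) ℝ) :
    Integrable (fun x : Metric.sphere (0 : E 16) 1 =>
      MvPolynomial.eval (fun i => (x : E 16) i) p) sphereUniform :=
  ((continuous_evalE p).comp continuous_subtype_val).integrable_of_hasCompactSupport
    (HasCompactSupport.of_compactSpace _)

/-- Integration over the sphere as a linear functional on polynomials. -/
def sphI : MvPolynomial (Fin 16) ℝ →ₗ[ℝ] ℝ where
  toFun p := ∫ ξ, MvPolynomial.eval (fun i => (ξ : E 16) i) p ∂sphereUniform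
  map_add' p q := by
    simp only [map_add]
    exact integral_add (integrable_evalE p) (integrable_evalE q)
  map_smul' c p := by
    simp only [MvPolynomial.smul_eval, RingHom.id_apply, smul_eq_mul]
    exact integral_const_mul _ _

lemma sphI_apply (p : MvPolynomial (Fin 16) ℝ) :
    sphI p = ∫ ξ, MvPolynomial.eval (fun i => (ξ : E 16) i) p ∂sphereUniform := rfl

/-- Reflection in the `i`-th coordinate. -/
def flipI (i : Fin 16) : E 16 ≃ₗᵢ[ℝ] E 16 :=
  LinearIsometryEquiv.piLpCongrRight 2
    (fun j => if j = i then LinearIsometryEquiv.neg ℝ else LinearIsometryEquiv.refl ℝ ℝ)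

lemma flipI_apply (i : Fin 16) (x : E 16) (k : Fin 16) :
    flipI i x k = if k = i then - x k else x k := by
  simp only [flipI, LinearIsometryEquiv.piLpCongrRight_apply]
  split_ifs <;> simp

lemma sphI_neg (i : Fin 16) (p : MvPolynomial (Fin 16) ℝ)
    (h : ∀ x : Fin 16 → ℝ, MvPolynomial.eval (fun k => if k = i then - x k else x k) p
      = - MvPolynomial.eval x p) : sphI p = 0 := by
  have h1 := integral_sphMap (flipI i) _ (continuous_evalE p)
  simp only [flipI_apply, h, integral_neg] at h1
  rw [sphI_apply]
  linarith

lemma sphI_one : sphI 1 = 1 := by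
  rw [sphI_apply]; simp

lemma sphI_sq_sum (p : MvPolynomial (Fin 16) ℝ) :
    sphI (p * ∑ i, MvPolynomial.X i ^ 2) = sphI p := by
  rw [sphI_apply, sphI_apply]
  congr 1
  ext ξ
  have h : ‖(ξ : E 16)‖ ^ 2 = 1 := by simp
  rw [EuclideanSpace.real_norm_sq_eq] at h
  simp [h]

lemma inner6 (v w : E 16) (h : ‖v‖ = ‖w‖) :
    ∫ ξ : Metric.sphere (0 : E 16) 1, ⟪v, (ξ : E 16)⟫ ^ 6 ∂sphereUniform =
    ∫ ξ : Metric.sphere (0 : E 16) 1, ⟪w, (ξ : E 16)⟫ ^ 6 ∂sphereUniform := by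
  rw [← integral_sphMap (Submodule.reflection (Submodule.span ℝ {v - w})ᗮ) (fun x => ⟪w, x⟫ ^ 6)
    (by fun_prop)]
  congr 1
  ext ξ
  have h2 : ⟪w, Submodule.reflection (Submodule.span ℝ {v - w})ᗮ (ξ : E 16)⟫ = ⟪v, (ξ : E 16)⟫ := by
    have h3 := LinearIsometryEquiv.inner_map_map
      (Submodule.reflection (Submodule.span ℝ {v - w})ᗮ) v (ξ : E 16)
    rw [Submodule.reflection_sub h] at h3
    exact h3
  rw [h2]

open MvPolynomial in
lemma sphI_pow6 (v : Fin 16 → ℝ) :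
    sphI ((∑ i, C (v i) * X i) ^ 6) = (∑ i, v i ^ 2) ^ 3 * sphI (X 0 ^ 6) := by
  have h := inner6 (vec v) (‖vec v‖ • εv 0) (by simp [norm_smul, εv])
  have hn : ‖vec v‖ ^ 2 = ∑ i, v i ^ 2 := by
    rw [EuclideanSpace.real_norm_sq_eq]; rfl
  rw [sphI_apply, sphI_apply, ← hn, ← integral_const_mul]
  simp only [inner_smul_left, εv, EuclideanSpace.inner_single_left] at h
  refine Eq.trans ?_ (h.trans ?_)
  · congr 1
    ext ξ
    simp [vec, PiLp.inner_apply, mul_comm]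
  · congr 1
    ext ξ
    simp; ring

open MvPolynomial in
lemma sphI_pow6_three (i j k : Fin 16) (hij : i ≠ j) (hik : i ≠ k) (hjk : j ≠ k) (a b c : ℝ) :
    sphI ((C a * X i + C b * X j + C c * X k) ^ 6) =
      (a ^ 2 + b ^ 2 + c ^ 2) ^ 3 * sphI (X 0 ^ 6) := by
  have h := sphI_pow6 (fun l => if l = i then a else if l = j then b else if l = k then c else 0)
  have e1 : ∀ l : Fin 16, (C (if l = i then a else if l = j then b else if l = k then c else 0) *
      X l : MvPolynomial (Fin 16) ℝ) = (if l = i then C a * X l else 0) +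
      (if l = j then C b * X l else 0) + (if l = k then C c * X l else 0) := by
    intro l
    by_cases h1 : l = i <;> by_cases h2 : l = j <;> by_cases h3 : l = k <;> simp_all
  have e2 : ∀ l : Fin 16, ((if l = i then a else if l = j then b else if l = k then c else 0) ^ 2
      : ℝ) = (if l = i then a ^ 2 else 0) +
      (if l = j then b ^ 2 else 0) + (if l = k then c ^ 2 else 0) := by
    intro l
    by_cases h1 : l = i <;> by_cases h2 : l = j <;> by_cases h3 : l = k <;> simp_all
  simp only [e1, e2, Finset.sum_add_distrib, Finset.sum_ite_eq', Finset.mem_univ, if_true] at h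
  exact h

open MvPolynomial in
/-- The sixth moments, up to the normalisation `sphI (X 0 ^ 6)`. -/
lemma sphI_moments (i j k : Fin 16) (hij : i ≠ j) (hik : i ≠ k) (hjk : j ≠ k) :
    sphI (X i ^ 6) = sphI (X 0 ^ 6) ∧ 5 * sphI (X i ^ 4 * X j ^ 2) = sphI (X 0 ^ 6) ∧
    15 * sphI (X i ^ 2 * X j ^ 2 * X k ^ 2) = sphI (X 0 ^ 6) := by
  have hp : ∀ a b c : ℝ, (a ^ 2 + b ^ 2 + c ^ 2) ^ 3 * sphI (X 0 ^ 6) =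
      a ^ 6 * sphI (X i ^ 6) + b ^ 6 * sphI (X j ^ 6) + c ^ 6 * sphI (X k ^ 6)
      + 15 * a ^ 4 * b ^ 2 * sphI (X i ^ 4 * X j ^ 2)
      + 15 * a ^ 4 * c ^ 2 * sphI (X i ^ 4 * X k ^ 2)
      + 15 * b ^ 4 * a ^ 2 * sphI (X j ^ 4 * X i ^ 2)
      + 15 * b ^ 4 * c ^ 2 * sphI (X j ^ 4 * X k ^ 2)
      + 15 * c ^ 4 * a ^ 2 * sphI (X k ^ 4 * X i ^ 2)
      + 15 * c ^ 4 * b ^ 2 * sphI (X k ^ 4 * X j ^ 2)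
      + 90 * a ^ 2 * b ^ 2 * c ^ 2 * sphI (X i ^ 2 * X j ^ 2 * X k ^ 2) := by
    intro a b c
    -- the terms odd in `X i`, and the remaining terms odd in `X j`
    have o1 : sphI (C a * X i * (6 * (C b * X j + C c * X k) ^ 5
        + 20 * (C a * X i) ^ 2 * (C b * X j + C c * X k) ^ 3
        + 6 * (C a * X i) ^ 4 * (C b * X j + C c * X k))) = 0 := by
      apply sphI_neg i
      intro x
      simp only [map_mul, map_add, map_pow, map_ofNat, eval_C, eval_X, if_neg hij.symm,
        if_neg hik.symm, if_true]
      ring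
    have o2 : sphI (C b * X j * (C c * X k) * (6 * (C c * X k) ^ 4 + 20 * (C b * X j) ^ 2 *
        (C c * X k) ^ 2 + 6 * (C b * X j) ^ 4 + 60 * (C a * X i) ^ 2 * (C c * X k) ^ 2
        + 60 * (C a * X i) ^ 2 * (C b * X j) ^ 2 + 30 * (C a * X i) ^ 4)) = 0 := by
      apply sphI_neg j
      intro x
      simp only [map_mul, map_add, map_pow, map_ofNat, eval_C, eval_X, if_neg hij,
        if_neg hjk.symm, if_true]
      ring
    rw [← sphI_pow6_three i j k hij hik hjk a b c]
    have hs : ∀ (r : ℝ) (p : MvPolynomial (Fin 16) ℝ), r * sphI p = sphI (C r * p) := by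
      intro r p
      rw [← smul_eq_C_mul, map_smul, smul_eq_mul]
    simp only [hs, ← map_add]
    rw [← sub_eq_zero, ← map_sub, ← o1, ← sub_eq_zero, ← map_sub, ← o2]
    congr 1
    simp only [map_mul, map_pow, map_ofNat]
    ring
  have h100 := hp 1 0 0
  have h010 := hp 0 1 0
  have h001 := hp 0 0 1
  have h110 := hp 1 1 0
  have h120 := hp 1 2 0
  have h101 := hp 1 0 1
  have h011 := hp 0 1 1
  have h111 := hp 1 1 1
  norm_num at h100 h010 h001 h110 h120 h101 h011 h111
  refine ⟨?_, ?_, ?_⟩ <;> linarith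

/-! ### The lattice -/

/-- The congruences describing `2 • BW16`. -/
def IsM (y : Fin 16 → ℤ) : Prop :=
  (∀ i, 2 ∣ y i - y 0) ∧
  4 ∣ y 0 + y 1 + y 2 + y 3 + y 4 + y 5 + y 6 + y 7 + y 8 + y 9 + y 10 + y 11 + y 12 + y 13
    + y 14 + y 15 ∧
  4 ∣ y 1 + y 3 + y 5 + y 7 + y 9 + y 11 + y 13 + y 15 ∧
  4 ∣ y 2 + y 3 + y 6 + y 7 + y 10 + y 11 + y 14 + y 15 ∧
  4 ∣ y 4 + y 5 + y 6 + y 7 + y 12 + y 13 + y 14 + y 15 ∧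
  4 ∣ y 8 + y 9 + y 10 + y 11 + y 12 + y 13 + y 14 + y 15 - 2 * y 0

lemma IsM.add {y z : Fin 16 → ℤ} (hy : IsM y) (hz : IsM z) : IsM (y + z) := by
  obtain ⟨a0, a1, a2, a3, a4, a5⟩ := hy
  obtain ⟨b0, b1, b2, b3, b4, b5⟩ := hz
  refine ⟨fun i => (dvd_add (a0 i) (b0 i)).trans (dvd_of_eq ?_),
    (dvd_add a1 b1).trans (dvd_of_eq ?_), (dvd_add a2 b2).trans (dvd_of_eq ?_),
    (dvd_add a3 b3).trans (dvd_of_eq ?_), (dvd_add a4 b4).trans (dvd_of_eq ?_),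
    (dvd_add a5 b5).trans (dvd_of_eq ?_)⟩ <;> simp only [Pi.add_apply] <;> ring

lemma IsM.smul {y : Fin 16 → ℤ} (hy : IsM y) (c : ℤ) : IsM (c • y) := by
  obtain ⟨a0, a1, a2, a3, a4, a5⟩ := hy
  refine ⟨fun i => ((a0 i).mul_left c).trans (dvd_of_eq ?_),
    (a1.mul_left c).trans (dvd_of_eq ?_), (a2.mul_left c).trans (dvd_of_eq ?_),
    (a3.mul_left c).trans (dvd_of_eq ?_), (a4.mul_left c).trans (dvd_of_eq ?_),
    (a5.mul_left c).trans (dvd_of_eq ?_)⟩ <;> simp only [Pi.smul_apply, smul_eq_mul] <;> ring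

lemma IsM.of_four {y : Fin 16 → ℤ} (h : ∀ i, 4 ∣ y i) : IsM y := by
  refine ⟨fun i => (dvd_sub ((show (2 : ℤ) ∣ 4 by norm_num).trans (h i))
    ((show (2 : ℤ) ∣ 4 by norm_num).trans (h 0))), ?_, ?_, ?_, ?_, ?_⟩
  on_goal 5 => refine dvd_sub ?_ ((h 0).mul_left 2)
  all_goals
    repeat refine dvd_add ?_ (h _)
    exact h _

lemma IsM.congr {y z : Fin 16 → ℤ} (hy : IsM y) (h : ∀ i, 4 ∣ z i - y i) : IsM z := by
  have := hy.add (IsM.of_four (y := z - y) h)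
  rwa [add_sub_cancel] at this

instance (y : Fin 16 → ℤ) : Decidable (IsM y) := by unfold IsM; infer_instance

/-- The vector `y / 2`. -/
def half (y : Fin 16 → ℤ) : E 16 := vec fun i => (y i : ℝ) / 2

lemma half_apply (y : Fin 16 → ℤ) (i : Fin 16) : half y i = (y i : ℝ) / 2 := rfl

lemma εv_apply (i j : Fin 16) : (εv i : E 16) j = if j = i then 1 else 0 := by
  simp [εv]

/-- Indicator vector of a list of positions, times two. -/
def ind (l : List (Fin 16)) : Fin 16 → ℤ := fun i => if i ∈ l then 2 else 0

lemma mem_half_of_BW16 (x : E 16) (hx : x ∈ BW16) : ∃ y, IsM y ∧ x = half y := by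
  unfold BW16 at hx
  induction hx using Submodule.span_induction with
  | zero => exact ⟨0, by decide, by ext i; simp [half_apply]⟩
  | add x z _ _ hx hz =>
    obtain ⟨y, hy, rfl⟩ := hx
    obtain ⟨w, hw, rfl⟩ := hz
    refine ⟨y + w, hy.add hw, ?_⟩
    ext i
    simp [half_apply]; ring
  | smul c x _ hx =>
    obtain ⟨y, hy, rfl⟩ := hx
    refine ⟨c • y, hy.smul c, ?_⟩
    ext i
    simp [half_apply]; ring
  | mem x hx =>
    have tet : ∀ a b c d : Fin 16, a ≠ b ∧ a ≠ c ∧ a ≠ d ∧ b ≠ c ∧ b ≠ d ∧ c ≠ d →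
        IsM (ind [a, b, c, d]) →
        ∃ y, IsM y ∧ (εv a + εv b + εv c + εv d : E 16) = half y := by
      rintro a b c d ⟨h1, h2, h3, h4, h5, h6⟩ hm
      refine ⟨_, hm, ?_⟩
      ext i
      simp only [half_apply, ind, PiLp.add_apply, εv_apply, List.mem_cons, List.not_mem_nil,
        or_false]
      by_cases q1 : i = a <;> by_cases q2 : i = b <;> by_cases q3 : i = c <;>
        by_cases q4 : i = d <;> simp_all
    rcases hx with ⟨i, rfl⟩ | hx
    · refine ⟨fun j => if j = i then 4 else 0, ?_, ?_⟩
      · revert i; decide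
      · ext j
        simp only [half_apply, PiLp.smul_apply, εv_apply]
        split_ifs <;> norm_num
    · simp only [Set.mem_insert_iff, Set.mem_singleton_iff] at hx
      rcases hx with rfl | rfl | rfl | rfl | rfl | rfl | rfl | rfl | rfl | rfl | rfl | rfl
      · refine ⟨![-1, 1, 1, 1, 1, 1, 1, 1, -1, 1, 1, 1, 1, 1, 1, 1], by decide, ?_⟩
        ext i
        fin_cases i <;> simp [half_apply, f0, vec]
      all_goals exact tet _ _ _ _ (by decide) (by decide)

lemma lattice_aux (y0 y1 y2 y3 y4 y5 y6 y7 y8 y9 y10 y11 y12 y13 y14 y15 x0 x1 x2 x3 x4 x5 x6 x7 x8 x9 x10 x11 x12 x13 x14 x15 c1 c2 c3 c4 : ℤ)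
    (e0 : y0 = 2 * x0 + -y0 * -1)
    (e1 : y1 = 2 * x1 + -y0 * 1)
    (e2 : y2 = 2 * x2 + -y0 * 1)
    (e3 : y3 = 2 * x3 + -y0 * 1)
    (e4 : y4 = 2 * x4 + -y0 * 1)
    (e5 : y5 = 2 * x5 + -y0 * 1)
    (e6 : y6 = 2 * x6 + -y0 * 1)
    (e7 : y7 = 2 * x7 + -y0 * 1)
    (e8 : y8 = 2 * x8 + -y0 * -1)
    (e9 : y9 = 2 * x9 + -y0 * 1)
    (e10 : y10 = 2 * x10 + -y0 * 1)
    (e11 : y11 = 2 * x11 + -y0 * 1)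
    (e12 : y12 = 2 * x12 + -y0 * 1)
    (e13 : y13 = 2 * x13 + -y0 * 1)
    (e14 : y14 = 2 * x14 + -y0 * 1)
    (e15 : y15 = 2 * x15 + -y0 * 1)
    (a1 : 4 ∣ y0 + y1 + y2 + y3 + y4 + y5 + y6 + y7 + y8 + y9 + y10 + y11 + y12 + y13 + y14 + y15)
    (a2 : 4 ∣ y1 + y3 + y5 + y7 + y9 + y11 + y13 + y15)
    (a3 : 4 ∣ y2 + y3 + y6 + y7 + y10 + y11 + y14 + y15)
    (a4 : 4 ∣ y4 + y5 + y6 + y7 + y12 + y13 + y14 + y15)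
    (a5 : 4 ∣ y8 + y9 + y10 + y11 + y12 + y13 + y14 + y15 - 2 * y0)
    (hc1 : c1 = x12 - x14 + x15 - x13) (hc2 : c2 = x6 - x7) (hc3 : c3 = x10 - x11)
    (hc4 : c4 = x14 - x15) :
    (∃ d, x0 = c1 + c2 + c3 + c4 + x3 + x5 + x7 + x9 + x11 + x13 + x15 + 2 * d) ∧
    (∃ d, x1 = x3 + x5 + x7 + x9 + x11 + x13 + x15 + 2 * d) ∧
    (∃ d, x2 = c2 + c3 + c4 + x3 + 2 * d) ∧
    (∃ d, x4 = c1 + c2 + x5 + 2 * d) ∧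
    (∃ d, x8 = c1 + c3 + x9 + 2 * d) := by
  obtain ⟨k1, a1⟩ := a1
  obtain ⟨k2, a2⟩ := a2
  obtain ⟨k3, a3⟩ := a3
  obtain ⟨k4, a4⟩ := a4
  obtain ⟨k5, a5⟩ := a5
  refine ⟨⟨k1 - 5 * y0 - k2 - k3 - k4 - k5 + x7 + x11 + x13 + x14 + x15, by linarith⟩,
    ⟨k2 + 2 * y0 - (x3 + x5 + x7 + x9 + x11 + x13 + x15), by linarith⟩,
    ⟨k3 + 2 * y0 - x3 - x6 - x10 - x14, by linarith⟩,
    ⟨k4 + 2 * y0 - x12 - x15 - x6 - x5, by linarith⟩,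
    ⟨k5 + 2 * y0 - x12 - x15 - x10 - x9, by linarith⟩⟩

set_option maxHeartbeats 2000000 in
lemma BW16_of_IsM (y : Fin 16 → ℤ) (h : IsM y) : half y ∈ BW16 := by
  obtain ⟨a0, a1, a2, a3, a4, a5⟩ := h
  -- x' = y/2 - y0 * (-1) f0
  have hx : ∃ x : Fin 16 → ℤ, (∀ i, y i = 2 * x i + -(y 0) *
      (![-1, 1, 1, 1, 1, 1, 1, 1, -1, 1, 1, 1, 1, 1, 1, 1] : Fin 16 → ℤ) i) := by
    have : ∀ i, ∃ x : ℤ, y i = 2 * x + -(y 0) *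
      (![-1, 1, 1, 1, 1, 1, 1, 1, -1, 1, 1, 1, 1, 1, 1, 1] : Fin 16 → ℤ) i := by
      intro i
      have := a0 i
      have hs : (![-1, 1, 1, 1, 1, 1, 1, 1, -1, 1, 1, 1, 1, 1, 1, 1] : Fin 16 → ℤ) i = 1 ∨
        (![-1, 1, 1, 1, 1, 1, 1, 1, -1, 1, 1, 1, 1, 1, 1, 1] : Fin 16 → ℤ) i = -1 := by
        clear this; revert i; decide
      rcases hs with hs | hs <;> rw [hs]
      · exact ⟨(y i + y 0) / 2, by omega⟩
      · exact ⟨(y i - y 0) / 2, by omega⟩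
    choose x hx using this
    exact ⟨x, hx⟩
  obtain ⟨x, hx⟩ := hx
  have e0 : y 0 = 2 * x 0 + -(y 0) * -1 := hx 0
  have e1 : y 1 = 2 * x 1 + -(y 0) * 1 := hx 1
  have e2 : y 2 = 2 * x 2 + -(y 0) * 1 := hx 2
  have e3 : y 3 = 2 * x 3 + -(y 0) * 1 := hx 3
  have e4 : y 4 = 2 * x 4 + -(y 0) * 1 := hx 4
  have e5 : y 5 = 2 * x 5 + -(y 0) * 1 := hx 5
  have e6 : y 6 = 2 * x 6 + -(y 0) * 1 := hx 6
  have e7 : y 7 = 2 * x 7 + -(y 0) * 1 := hx 7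
  have e8 : y 8 = 2 * x 8 + -(y 0) * -1 := hx 8
  have e9 : y 9 = 2 * x 9 + -(y 0) * 1 := hx 9
  have e10 : y 10 = 2 * x 10 + -(y 0) * 1 := hx 10
  have e11 : y 11 = 2 * x 11 + -(y 0) * 1 := hx 11
  have e12 : y 12 = 2 * x 12 + -(y 0) * 1 := hx 12
  have e13 : y 13 = 2 * x 13 + -(y 0) * 1 := hx 13
  have e14 : y 14 = 2 * x 14 + -(y 0) * 1 := hx 14
  have e15 : y 15 = 2 * x 15 + -(y 0) * 1 := hx 15
  -- coefficients
  obtain ⟨c1, hc1⟩ : ∃ c1, c1 = x 12 - x 14 + x 15 - x 13 := ⟨_, rfl⟩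
  obtain ⟨c2, hc2⟩ : ∃ c, c = x 6 - x 7 := ⟨_, rfl⟩
  obtain ⟨c3, hc3⟩ : ∃ c, c = x 10 - x 11 := ⟨_, rfl⟩
  obtain ⟨c4, hc4⟩ : ∃ c, c = x 14 - x 15 := ⟨_, rfl⟩
  obtain ⟨⟨d0, hd0⟩, ⟨d1, hd1⟩, ⟨d2, hd2⟩, ⟨d4, hd4⟩, ⟨d8, hd8⟩⟩ := lattice_aux
    (y 0) (y 1) (y 2) (y 3) (y 4) (y 5) (y 6) (y 7) (y 8) (y 9) (y 10) (y 11) (y 12) (y 13) (y 14) (y 15)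
    (x 0) (x 1) (x 2) (x 3) (x 4) (x 5) (x 6) (x 7) (x 8) (x 9) (x 10) (x 11) (x 12) (x 13) (x 14) (x 15)
    c1 c2 c3 c4 e0 e1 e2 e3 e4 e5 e6 e7 e8 e9 e10 e11 e12 e13 e14 e15
    a1 a2 a3 a4 a5 hc1 hc2 hc3 hc4
  have key : half y = (-(y 0)) • f0 + c1 • g1 + c2 • g2 + c3 • g3 + c4 • g4 + x 3 • g5
      + x 5 • g6 + x 7 • g7 + x 9 • g8 + x 11 • g9 + x 13 • g10 + x 15 • g11
      + d0 • ((2 : ℝ) • εv 0) + d1 • ((2 : ℝ) • εv 1) + d2 • ((2 : ℝ) • εv 2)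
      + d4 • ((2 : ℝ) • εv 4) + d8 • ((2 : ℝ) • εv 8) := by
    ext i
    rw [half_apply, hx i]
    have r0 : (x 0 : ℝ) = c1 + c2 + c3 + c4 + x 3 + x 5 + x 7 + x 9 + x 11 + x 13 + x 15
      + 2 * d0 := by exact_mod_cast hd0
    have r1 : (x 1 : ℝ) = x 3 + x 5 + x 7 + x 9 + x 11 + x 13 + x 15 + 2 * d1 := by
      exact_mod_cast hd1
    have r2 : (x 2 : ℝ) = c2 + c3 + c4 + x 3 + 2 * d2 := by exact_mod_cast hd2
    have r4 : (x 4 : ℝ) = c1 + c2 + x 5 + 2 * d4 := by exact_mod_cast hd4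
    have r8 : (x 8 : ℝ) = c1 + c3 + x 9 + 2 * d8 := by exact_mod_cast hd8
    have s1 : (c1 : ℝ) = x 12 - x 14 + x 15 - x 13 := by exact_mod_cast hc1
    have s2 : (c2 : ℝ) = x 6 - x 7 := by exact_mod_cast hc2
    have s3 : (c3 : ℝ) = x 10 - x 11 := by exact_mod_cast hc3
    have s4 : (c4 : ℝ) = x 14 - x 15 := by exact_mod_cast hc4
    simp only [f0, vec, g1, g2, g3, g4, g5, g6, g7, g8, g9, g10, g11, PiLp.add_apply,
      PiLp.smul_apply, εv_apply, zsmul_eq_mul, smul_eq_mul, WithLp.equiv_symm_apply]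
    fin_cases i <;> simp <;> linarith
  rw [key]
  have hg : ∀ v ∈ ((Set.range fun i : Fin 16 => (2 : ℝ) • (εv i : E 16)) ∪
    {f0, g1, g2, g3, g4, g5, g6, g7, g8, g9, g10, g11}), ∀ c : ℤ, c • v ∈ BW16 :=
    fun v hv c => Submodule.smul_mem _ _ (Submodule.subset_span hv)
  have he : ∀ (i : Fin 16) (c : ℤ), c • ((2 : ℝ) • (εv i : E 16)) ∈ BW16 :=
    fun i c => hg _ (Or.inl ⟨i, rfl⟩) c
  repeat' apply Submodule.add_mem
  all_goals first | exact he _ _ | exact hg _ (Or.inr (by simp)) _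

/-! ### Planes -/

lemma sum16 {M : Type*} [AddCommMonoid M] (f : Fin 16 → M) :
    ∑ i, f i = f 0 + f 1 + f 2 + f 3 + f 4 + f 5 + f 6 + f 7 + f 8 + f 9 + f 10 + f 11 + f 12
      + f 13 + f 14 + f 15 := by
  simp only [Fin.sum_univ_castSucc, Finset.univ_eq_empty, Finset.sum_empty, zero_add]
  rfl

/-- Twice the indicator function of a set of positions. -/
def tw (T : Finset (Fin 16)) : Fin 16 → ℤ := fun i => if i ∈ T then 2 else 0

/-- The 140 affine planes, i.e. the supports of the codewords of weight four. -/
lemma exists_planes : ∃ S : Finset (Finset (Fin 16)), S =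
    (Finset.powersetCard 4 Finset.univ).filter fun T => IsM (tw T) := ⟨_, rfl⟩

/-- The 140 affine planes, i.e. the supports of the codewords of weight four. -/
def planes : Finset (Finset (Fin 16)) := Classical.choose exists_planes

lemma planes_def : planes =
    (Finset.powersetCard 4 Finset.univ).filter fun T => IsM (tw T) := Classical.choose_spec exists_planes

/-- Binary digits. -/
def vb (i : Fin 16) : Fin 4 → ZMod 2 := fun r => if Nat.testBit i.val r.val then 1 else 0

lemma vb_bij : Function.Bijective vb := by decide +kernel

lemma vb_eq_zero_iff (t : Fin 16 → ℤ) : (∑ i, (t i : ZMod 2) • vb i = 0) ↔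
    2 ∣ t 1 + t 3 + t 5 + t 7 + t 9 + t 11 + t 13 + t 15 ∧
    2 ∣ t 2 + t 3 + t 6 + t 7 + t 10 + t 11 + t 14 + t 15 ∧
    2 ∣ t 4 + t 5 + t 6 + t 7 + t 12 + t 13 + t 14 + t 15 ∧
    2 ∣ t 8 + t 9 + t 10 + t 11 + t 12 + t 13 + t 14 + t 15 := by
  have hd : ∀ a : ℤ, 2 ∣ a ↔ (a : ZMod 2) = 0 := fun a =>
    ((ZMod.intCast_zmod_eq_zero_iff_dvd a 2)).symm
  simp only [hd, funext_iff, Fin.forall_fin_succ, sum16, Pi.zero_apply]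
  simp [vb, Nat.testBit]

lemma isM_tw_iff (T : Finset (Fin 16)) (hT : T.card = 4) : IsM (tw T) ↔ ∑ i ∈ T, vb i = 0 := by
  obtain ⟨t, ht⟩ : ∃ t : Fin 16 → ℤ, t = fun i => if i ∈ T then 1 else 0 := ⟨_, rfl⟩
  have h1 : tw T = fun i => 2 * t i := by
    ext i; simp only [tw, ht]; split_ifs <;> norm_num
  have h2 : ∑ i ∈ T, vb i = ∑ i, (t i : ZMod 2) • vb i := by
    simp only [ht, Int.cast_ite, Int.cast_one, Int.cast_zero, ite_smul, one_smul, zero_smul]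
    simp
  have h3 : ∑ i, t i = 4 := by
    simp [ht, hT]
  rw [h2, vb_eq_zero_iff, h1, IsM]
  rw [sum16] at h3
  have e : ∀ a : ℤ, 4 ∣ 2 * a ↔ 2 ∣ a := fun a => by omega
  have q0 : ∀ i, 2 ∣ 2 * t i - 2 * t 0 := fun i => ⟨t i - t 0, by ring⟩
  simp only [← mul_add, e, h3, ← mul_sub]
  have : ∀ a b : ℤ, 2 ∣ a - 2 * b ↔ 2 ∣ a := fun a b => by omega
  simp [this]

lemma mem_planes (T : Finset (Fin 16)) : T ∈ planes ↔ T.card = 4 ∧ IsM (tw T) := by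
  simp [planes_def, Finset.mem_powersetCard]

/-- Number of planes with a given property. -/
def cnt (P : Finset (Fin 16) → Prop) [DecidablePred P] : ℕ := (planes.filter P).card

lemma cnt_congr {P Q : Finset (Fin 16) → Prop} [DecidablePred P] [DecidablePred Q]
    (h : ∀ T, P T ↔ Q T) : cnt P = cnt Q := by
  unfold cnt
  rw [Finset.filter_congr (fun T _ => h T)]

lemma cnt_triple (i j k : Fin 16) (hij : i ≠ j) (hik : i ≠ k) (hjk : j ≠ k) :
    cnt (fun T => i ∈ T ∧ j ∈ T ∧ k ∈ T) = 1 := by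
  have two : ∀ u : Fin 4 → ZMod 2, u + u = 0 := by decide
  have neg : ∀ u w : Fin 4 → ZMod 2, u + w = 0 → u = w := by
    intro u w h
    calc u = u + (w + w) := by rw [two]; simp
      _ = (u + w) + w := by abel
      _ = w := by rw [h]; simp
  obtain ⟨l, hl⟩ := vb_bij.2 (vb i + vb j + vb k)
  have hli : l ≠ i := by
    rintro rfl
    apply hjk; apply vb_bij.1; apply neg
    have : vb l + (vb j + vb k) = vb l + 0 := by rw [add_zero, ← add_assoc, ← hl]
    exact add_left_cancel this
  have hlj : l ≠ j := by
    rintro rfl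
    apply hik; apply vb_bij.1; apply neg
    have : vb l + (vb i + vb k) = vb l + 0 := by
      rw [add_zero]; conv_rhs => rw [hl]
      abel
    exact add_left_cancel this
  have hlk : l ≠ k := by
    rintro rfl
    apply hij; apply vb_bij.1; apply neg
    have : vb l + (vb i + vb j) = vb l + 0 := by
      rw [add_zero]; conv_rhs => rw [hl]
      abel
    exact add_left_cancel this
  have sum4 : ∀ m, m ≠ i → m ≠ j → m ≠ k → ∑ a ∈ ({m, i, j, k} : Finset (Fin 16)), vb a =
      vb m + (vb i + (vb j + vb k)) := by
    intro m h1 h2 h3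
    rw [Finset.sum_insert (by simp [*]), Finset.sum_insert (by simp [*]),
      Finset.sum_insert (by simp [*]), Finset.sum_singleton]
  have card4 : ∀ m, m ≠ i → m ≠ j → m ≠ k → ({m, i, j, k} : Finset (Fin 16)).card = 4 := by
    intro m h1 h2 h3
    rw [Finset.card_insert_of_notMem (by simp [*]), Finset.card_insert_of_notMem (by simp [*]),
      Finset.card_insert_of_notMem (by simp [*]), Finset.card_singleton]
  rw [cnt, Finset.card_eq_one]
  refine ⟨{l, i, j, k}, ?_⟩
  ext T
  simp only [Finset.mem_filter, mem_planes, Finset.mem_singleton]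
  constructor
  · rintro ⟨⟨hc, hM⟩, hi, hj, hk⟩
    have h3 : ({i, j, k} : Finset (Fin 16)).card = 3 := by
      rw [Finset.card_insert_of_notMem (by simp [*]), Finset.card_insert_of_notMem (by simp [*]),
        Finset.card_singleton]
    have hsub : ({i, j, k} : Finset (Fin 16)) ⊆ T := by
      intro a ha
      simp only [Finset.mem_insert, Finset.mem_singleton] at ha
      rcases ha with rfl | rfl | rfl <;> assumption
    obtain ⟨m, hm, rfl⟩ := (Finset.exists_eq_insert_iff (s := {i, j, k}) (t := T)).2
      ⟨hsub, by rw [h3, hc]⟩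
    simp only [Finset.mem_insert, Finset.mem_singleton, not_or] at hm
    rw [isM_tw_iff _ hc, sum4 m hm.1 hm.2.1 hm.2.2] at hM
    have : m = l := by
      apply vb_bij.1
      rw [hl, neg _ _ hM, add_assoc]
    rw [this]
  · rintro rfl
    refine ⟨⟨card4 l hli hlj hlk, ?_⟩, by simp⟩
    rw [isM_tw_iff _ (card4 l hli hlj hlk), sum4 l hli hlj hlk, hl, ← add_assoc (vb i) (vb j), two]

lemma cnt_sum (P : Finset (Fin 16) → Prop) [DecidablePred P] :
    ∑ k, cnt (fun T => P T ∧ k ∈ T) = 4 * cnt P := by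
  simp only [cnt, ← Finset.filter_filter, Finset.card_filter _ (Finset.filter P planes)]
  rw [Finset.sum_comm]
  rw [Finset.sum_congr rfl (g := fun _ => 4)]
  · simp [mul_comm]
  · intro T hT
    rw [Finset.mem_filter, mem_planes] at hT
    simp [hT.1.1]

lemma sum_const_off (f : Fin 16 → ℕ) (s : Finset (Fin 16)) (c : ℕ) (h : ∀ k ∉ s, f k = c) :
    ∑ k, f k = ∑ k ∈ s, f k + (16 - s.card) * c := by
  rw [← Finset.sum_add_sum_compl s]
  congr 1
  rw [Finset.sum_congr rfl (g := fun _ => c)]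
  · simp [Finset.card_compl]
  · intro k hk; exact h k (by simpa using hk)

lemma cnt_pair (i j : Fin 16) (hij : i ≠ j) : cnt (fun T => i ∈ T ∧ j ∈ T) = 7 := by
  have h := cnt_sum (fun T => i ∈ T ∧ j ∈ T)
  rw [sum_const_off _ {i, j} 1] at h
  · rw [Finset.sum_pair hij, Finset.card_pair hij] at h
    have e1 : cnt (fun T => (i ∈ T ∧ j ∈ T) ∧ i ∈ T) = cnt (fun T => i ∈ T ∧ j ∈ T) :=
      cnt_congr (fun T => by tauto)
    have e2 : cnt (fun T => (i ∈ T ∧ j ∈ T) ∧ j ∈ T) = cnt (fun T => i ∈ T ∧ j ∈ T) :=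
      cnt_congr (fun T => by tauto)
    rw [e1, e2] at h
    omega
  · intro k hk
    simp only [Finset.mem_insert, Finset.mem_singleton, not_or] at hk
    exact (cnt_congr (fun T => and_assoc)).trans
      (cnt_triple i j k hij (Ne.symm hk.1) (Ne.symm hk.2))

lemma cnt_single (i : Fin 16) : cnt (fun T => i ∈ T) = 35 := by
  have h := cnt_sum (fun T => i ∈ T)
  rw [sum_const_off _ {i} 7] at h
  · rw [Finset.sum_singleton, Finset.card_singleton] at h
    have e1 : cnt (fun T => i ∈ T ∧ i ∈ T) = cnt (fun T => i ∈ T) :=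
      cnt_congr (fun T => by tauto)
    rw [e1] at h
    omega
  · intro k hk
    exact cnt_pair i k (fun h => hk (by simp [h]))

lemma card_planes : planes.card = 140 := by
  have h := cnt_sum (fun _ => True)
  simp only [true_and, cnt_single] at h
  simp [cnt] at h
  omega

/-! ### The minimal vectors -/

/-- Vectors `±4` in position `i`. -/
def PA (i : Fin 16) : Finset (Fin 16 → ℤ) :=
  Fintype.piFinset fun j => if j = i then {4, -4} else {0}

/-- Vectors `±2` in the positions of `T`. -/
def PB (T : Finset (Fin 16)) : Finset (Fin 16 → ℤ) :=
  Fintype.piFinset fun j => if j ∈ T then {2, -2} else {0}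

/-- Sign vectors of the odd minimal vectors, in terms of the 11 information bits. -/
def cwz (b3 b5 b6 b7 b9 b10 b11 b12 b13 b14 b15 : ℤ) : Fin 16 → ℤ :=
  let b8 := (1 + b9 + b10 + b11 + b12 + b13 + b14 + b15) % 2
  let b4 := (b5 + b6 + b7 + b12 + b13 + b14 + b15) % 2
  let b2 := (b3 + b6 + b7 + b10 + b11 + b14 + b15) % 2
  let b1 := (b3 + b5 + b7 + b9 + b11 + b13 + b15) % 2
  let b0 := (b1 + b2 + b3 + b4 + b5 + b6 + b7 + b8 + b9 + b10 + b11 + b12 + b13 + b14 + b15) % 2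
  ![1 - 2 * b0, 1 - 2 * b1, 1 - 2 * b2, 1 - 2 * b3, 1 - 2 * b4, 1 - 2 * b5, 1 - 2 * b6, 1 - 2 * b7,
    1 - 2 * b8, 1 - 2 * b9, 1 - 2 * b10, 1 - 2 * b11, 1 - 2 * b12, 1 - 2 * b13, 1 - 2 * b14,
    1 - 2 * b15]

/-- Integer value of a bit. -/
def bz (b : Bool) : ℤ := if b then 1 else 0

lemma bz_cases (b : Bool) : bz b = 0 ∨ bz b = 1 := by cases b <;> simp [bz]

lemma bz_inj : Function.Injective bz := by decide

/-- `cwz` on bits. -/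
def cw (b : Fin 11 → Bool) : Fin 16 → ℤ :=
  cwz (bz (b 0)) (bz (b 1)) (bz (b 2)) (bz (b 3)) (bz (b 4)) (bz (b 5)) (bz (b 6)) (bz (b 7))
    (bz (b 8)) (bz (b 9)) (bz (b 10))

lemma cw_inj : Function.Injective cw := by
  intro b c h
  have e : ∀ x y : Bool, (1 - 2 * bz x : ℤ) = 1 - 2 * bz y → x = y := fun x y hxy =>
    bz_inj (by omega)
  ext1 i
  have h3 := e _ _ (congrFun h 3)
  have h5 := e _ _ (congrFun h 5)
  have h6 := e _ _ (congrFun h 6)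
  have h7 := e _ _ (congrFun h 7)
  have h9 := e _ _ (congrFun h 9)
  have h10 := e _ _ (congrFun h 10)
  have h11 := e _ _ (congrFun h 11)
  have h12 := e _ _ (congrFun h 12)
  have h13 := e _ _ (congrFun h 13)
  have h14 := e _ _ (congrFun h 14)
  have h15 := e _ _ (congrFun h 15)
  fin_cases i <;> assumption

/-- The odd minimal vectors. -/
lemma exists_SC : ∃ S : Finset (Fin 16 → ℤ), S =
    Finset.univ.image cw := ⟨_, rfl⟩

/-- The odd minimal vectors. -/
def SC : Finset (Fin 16 → ℤ) := Classical.choose exists_SC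

lemma SC_def : SC =
    Finset.univ.image cw := Classical.choose_spec exists_SC

lemma card_SC : SC.card = 2048 := by
  rw [SC_def, Finset.card_image_of_injective _ cw_inj]
  simp

lemma par8 (s a b c d e f g h : ℤ) (ha : 0 ≤ a ∧ a ≤ 1) :
    4 ∣ (1 - 2 * a) + (1 - 2 * b) + (1 - 2 * c) + (1 - 2 * d) + (1 - 2 * e) + (1 - 2 * f)
      + (1 - 2 * g) + (1 - 2 * h) - 2 * (1 - 2 * s) ↔ a = (1 + b + c + d + e + f + g + h) % 2 := by
  omega

lemma par8' (a b c d e f g h : ℤ) (ha : 0 ≤ a ∧ a ≤ 1) :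
    4 ∣ (1 - 2 * a) + (1 - 2 * b) + (1 - 2 * c) + (1 - 2 * d) + (1 - 2 * e) + (1 - 2 * f)
      + (1 - 2 * g) + (1 - 2 * h) ↔ a = (b + c + d + e + f + g + h) % 2 := by
  omega

lemma par16 (a b c d e f g h i j k l m n o p : ℤ) (ha : 0 ≤ a ∧ a ≤ 1) :
    4 ∣ (1 - 2 * a) + (1 - 2 * b) + (1 - 2 * c) + (1 - 2 * d) + (1 - 2 * e) + (1 - 2 * f)
      + (1 - 2 * g) + (1 - 2 * h) + (1 - 2 * i) + (1 - 2 * j) + (1 - 2 * k) + (1 - 2 * l)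
      + (1 - 2 * m) + (1 - 2 * n) + (1 - 2 * o) + (1 - 2 * p) ↔
      a = (b + c + d + e + f + g + h + i + j + k + l + m + n + o + p) % 2 := by
  omega

lemma mod_two_bd (a : ℤ) : 0 ≤ a % 2 ∧ a % 2 ≤ 1 := by omega

lemma pm_iff (a : ℤ) : (a = 1 ∨ a = -1) ↔ ∃ b : Bool, a = 1 - 2 * bz b := by
  constructor
  · rintro (rfl | rfl)
    · exact ⟨false, by simp [bz]⟩
    · exact ⟨true, by simp [bz]⟩
  · rintro ⟨b, rfl⟩
    cases b <;> simp [bz]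

lemma pm_mod (a : ℤ) : (1 - 2 * (a % 2) = 1 ∨ 1 - 2 * (a % 2) = -1) := by omega

lemma cw_isM (b : Fin 11 → Bool) : IsM (cw b) ∧ ∀ i, cw b i = 1 ∨ cw b i = -1 := by
  have hpm : ∀ i, cw b i = 1 ∨ cw b i = -1 := by
    have hb : ∀ j, 1 - 2 * bz (b j) = 1 ∨ 1 - 2 * bz (b j) = -1 :=
      fun j => (pm_iff _).2 ⟨_, rfl⟩
    intro i
    fin_cases i
    all_goals first
      | exact pm_mod _
      | exact hb _
  refine ⟨⟨?_, ?_, ?_, ?_, ?_, ?_⟩, hpm⟩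
  · intro i
    rcases hpm i with h | h <;> rcases hpm 0 with h' | h' <;> rw [h, h'] <;> norm_num
  · exact (par16 _ _ _ _ _ _ _ _ _ _ _ _ _ _ _ _ (mod_two_bd _)).2 rfl
  · exact (par8' _ _ _ _ _ _ _ _ (mod_two_bd _)).2 rfl
  · exact (par8' _ _ _ _ _ _ _ _ (mod_two_bd _)).2 rfl
  · exact (par8' _ _ _ _ _ _ _ _ (mod_two_bd _)).2 rfl
  · exact (par8 _ _ _ _ _ _ _ _ _ (mod_two_bd _)).2 rfl

lemma mem_SC (y : Fin 16 → ℤ) : y ∈ SC ↔ IsM y ∧ ∀ i, y i = 1 ∨ y i = -1 := by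
  rw [SC_def, Finset.mem_image]
  constructor
  · rintro ⟨b, -, rfl⟩
    exact cw_isM b
  · rintro ⟨hM, hpm⟩
    have := fun i => (pm_iff _).1 (hpm i)
    choose c hc using this
    obtain rfl : y = fun i => 1 - 2 * bz (c i) := funext hc
    obtain ⟨-, a1, a2, a3, a4, a5⟩ := hM
    have bd : ∀ x : Bool, 0 ≤ bz x ∧ bz x ≤ 1 := by decide
    rw [par16 _ _ _ _ _ _ _ _ _ _ _ _ _ _ _ _ (bd _)] at a1
    rw [par8' _ _ _ _ _ _ _ _ (bd _)] at a2 a3 a4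
    rw [par8 _ _ _ _ _ _ _ _ _ (bd _)] at a5
    refine ⟨![c 3, c 5, c 6, c 7, c 9, c 10, c 11, c 12, c 13, c 14, c 15], Finset.mem_univ _, ?_⟩
    have key : (fun i => 1 - 2 * bz (c i)) = ![1 - 2 * bz (c 0), 1 - 2 * bz (c 1),
      1 - 2 * bz (c 2), 1 - 2 * bz (c 3), 1 - 2 * bz (c 4), 1 - 2 * bz (c 5), 1 - 2 * bz (c 6),
      1 - 2 * bz (c 7), 1 - 2 * bz (c 8), 1 - 2 * bz (c 9), 1 - 2 * bz (c 10), 1 - 2 * bz (c 11),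
      1 - 2 * bz (c 12), 1 - 2 * bz (c 13), 1 - 2 * bz (c 14), 1 - 2 * bz (c 15)] := by
      ext i; fin_cases i <;> rfl
    rw [key, a1, a2, a3, a4, a5]
    rfl

lemma mem_PA (i : Fin 16) (y : Fin 16 → ℤ) :
    y ∈ PA i ↔ (y i = 4 ∨ y i = -4) ∧ ∀ j, j ≠ i → y j = 0 := by
  rw [PA, Fintype.mem_piFinset]
  constructor
  · intro h
    refine ⟨by simpa using h i, fun j hj => by simpa [hj] using h j⟩
  · rintro ⟨h1, h2⟩ j
    by_cases hj : j = i
    · subst hj; simpa using h1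
    · simpa [hj] using h2 j hj

lemma mem_PB (T : Finset (Fin 16)) (y : Fin 16 → ℤ) :
    y ∈ PB T ↔ ∀ j, (j ∈ T → y j = 2 ∨ y j = -2) ∧ (j ∉ T → y j = 0) := by
  rw [PB, Fintype.mem_piFinset]
  refine forall_congr' fun j => ?_
  by_cases hj : j ∈ T <;> simp [hj]

lemma card_PA (i : Fin 16) : (PA i).card = 2 := by
  rw [PA, Fintype.card_piFinset]
  have : ∀ j, (if j = i then ({4, -4} : Finset ℤ) else {0}).card = if j = i then 2 else 1 := by
    intro j; split_ifs <;> rfl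
  simp [this]

lemma card_PB (T : Finset (Fin 16)) : (PB T).card = 2 ^ T.card := by
  rw [PB, Fintype.card_piFinset]
  have : ∀ j, (if j ∈ T then ({2, -2} : Finset ℤ) else {0}).card = if j ∈ T then 2 else 1 := by
    intro j; split_ifs <;> rfl
  simp [this]

/-- All (doubled) minimal vectors. -/
lemma exists_SS : ∃ S : Finset (Fin 16 → ℤ), S =
    (Finset.univ.biUnion PA ∪ planes.biUnion PB) ∪ SC := ⟨_, rfl⟩

/-- All (doubled) minimal vectors. -/
def SS : Finset (Fin 16 → ℤ) := Classical.choose exists_SS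

lemma SS_def : SS =
    (Finset.univ.biUnion PA ∪ planes.biUnion PB) ∪ SC := Classical.choose_spec exists_SS

lemma mem_SS (y : Fin 16 → ℤ) : y ∈ SS ↔ IsM y ∧ ∑ i, y i ^ 2 = 16 := by
  simp only [SS_def, Finset.mem_union, Finset.mem_biUnion, Finset.mem_univ, true_and]
  constructor
  · rintro ((⟨i, hi⟩ | ⟨T, hT, hy⟩) | hy)
    · rw [mem_PA] at hi
      constructor
      · apply IsM.of_four
        intro j
        by_cases hj : j = i
        · subst hj; rcases hi.1 with h | h <;> rw [h] <;> norm_num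
        · rw [hi.2 j hj]; norm_num
      · rw [Finset.sum_eq_single i]
        · rcases hi.1 with h | h <;> rw [h] <;> norm_num
        · intro j _ hj; rw [hi.2 j hj]; norm_num
        · simp
    · rw [mem_PB] at hy
      rw [mem_planes] at hT
      constructor
      · apply hT.2.congr
        intro j
        by_cases hj : j ∈ T
        · rcases (hy j).1 hj with h | h <;> simp [tw, hj, h]
        · simp [tw, hj, (hy j).2 hj]
      · have : ∀ j, y j ^ 2 = if j ∈ T then 4 else 0 := by
          intro j
          by_cases hj : j ∈ T
          · rcases (hy j).1 hj with h | h <;> simp [hj, h]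
          · simp [hj, (hy j).2 hj]
        simp [this, hT.1]
    · rw [mem_SC] at hy
      refine ⟨hy.1, ?_⟩
      have : ∀ j, y j ^ 2 = 1 := by
        intro j
        rcases hy.2 j with h | h <;> simp [h]
      simp [this]
  · rintro ⟨hM, hs⟩
    by_cases hp : 2 ∣ y 0
    · left
      have hev : ∀ i, ∃ x, y i = 2 * x := fun i => by
        have h := dvd_add (hM.1 i) hp
        rw [sub_add_cancel] at h
        exact h
      choose x hx using hev
      have hs4 : ∑ i, x i ^ 2 = 4 := by
        have : ∑ i, y i ^ 2 = 4 * ∑ i, x i ^ 2 := by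
          rw [Finset.mul_sum]
          exact Finset.sum_congr rfl fun i _ => by rw [hx i]; ring
        omega
      by_cases hbig : ∃ i, 4 ≤ x i ^ 2
      · left
        obtain ⟨i, hi⟩ := hbig
        refine ⟨i, ?_⟩
        rw [← Finset.add_sum_erase _ _ (Finset.mem_univ i)] at hs4
        have hnn : ∀ j ∈ Finset.univ.erase i, 0 ≤ x j ^ 2 := fun j _ => sq_nonneg _
        have hz : ∑ j ∈ Finset.univ.erase i, x j ^ 2 = 0 := by
          have := Finset.sum_nonneg hnn
          omega
        have hz' := (Finset.sum_eq_zero_iff_of_nonneg hnn).1 hz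
        rw [mem_PA]
        constructor
        · have h4 : x i ^ 2 = 2 ^ 2 := by omega
          rcases sq_eq_sq_iff_eq_or_eq_neg.1 h4 with h | h <;> rw [hx i, h] <;> norm_num
        · intro j hj
          have := hz' j (by simp [hj])
          rw [hx j, pow_eq_zero_iff (two_ne_zero) |>.1 this]; norm_num
      · right
        push Not at hbig
        have hsm : ∀ i, x i = 0 ∨ x i = 1 ∨ x i = -1 := by
          intro i
          have h1 := hbig i
          have h2 : x i < 2 := by nlinarith
          have h3 : -2 < x i := by nlinarith
          omega
        refine ⟨Finset.univ.filter fun i => x i ≠ 0, ?_, ?_⟩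
        · rw [mem_planes]
          constructor
          · have : ∀ i, x i ^ 2 = if x i ≠ 0 then 1 else 0 := by
              intro i; rcases hsm i with h | h | h <;> simp [h]
            simp only [this] at hs4
            rw [Finset.sum_boole] at hs4
            exact_mod_cast hs4
          · apply hM.congr
            intro j
            rw [hx j]
            rcases hsm j with h | h | h <;> simp [tw, h]
        · rw [mem_PB]
          intro j
          rw [hx j]
          rcases hsm j with h | h | h <;> simp [h]
    · right
      rw [mem_SC]
      refine ⟨hM, ?_⟩
      have hge : ∀ i ∈ Finset.univ, 0 ≤ y i ^ 2 - 1 := by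
        intro i _
        have : y i ≠ 0 := by
          intro h
          have h2 := hM.1 i
          rw [h, zero_sub, dvd_neg] at h2
          exact hp h2
        have : 0 < y i ^ 2 := by positivity
        omega
      have hz : ∑ i, (y i ^ 2 - 1) = 0 := by
        rw [Finset.sum_sub_distrib, hs]; simp
      intro i
      have := (Finset.sum_eq_zero_iff_of_nonneg hge).1 hz i (Finset.mem_univ _)
      exact sq_eq_one_iff.1 (by omega)

/-- Sums over the minimal vectors of functions of the squares of the coordinates. -/
lemma sum_SS (g : (Fin 16 → ℤ) → ℤ) : ∑ y ∈ SS, g (fun i => y i ^ 2) =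
    ∑ i, 2 * g (fun j => if j = i then 16 else 0) +
    ∑ T ∈ planes, 16 * g (fun j => if j ∈ T then 4 else 0) + 2048 * g (fun _ => 1) := by
  have hAB : Disjoint (Finset.univ.biUnion PA) (planes.biUnion PB) := by
    rw [Finset.disjoint_left]
    intro y h1 h2
    simp only [Finset.mem_biUnion, Finset.mem_univ, true_and, mem_PA, mem_PB] at h1 h2
    obtain ⟨i, hi, -⟩ := h1
    obtain ⟨T, -, hT⟩ := h2
    by_cases h : i ∈ T
    · have := (hT i).1 h; omega
    · have := (hT i).2 h; omega
  have hABC : Disjoint (Finset.univ.biUnion PA ∪ planes.biUnion PB) SC := by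
    rw [Finset.disjoint_left]
    intro y h1 h2
    simp only [Finset.mem_union, Finset.mem_biUnion, Finset.mem_univ, true_and, mem_PA, mem_PB,
      mem_SC] at h1 h2
    have h3 := h2.2
    rcases h1 with ⟨i, hi, -⟩ | ⟨T, -, hT⟩
    · have := h3 i; omega
    · have := h3 0
      by_cases h : 0 ∈ T
      · have := (hT 0).1 h; omega
      · have := (hT 0).2 h; omega
  rw [SS_def, Finset.sum_union hABC, Finset.sum_union hAB, Finset.sum_biUnion, Finset.sum_biUnion]
  · refine congrArg₂ (· + ·) (congrArg₂ (· + ·) ?_ ?_) ?_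
    · · refine Finset.sum_congr rfl fun i _ => ?_
        rw [Finset.sum_congr rfl (g := fun _ => g (fun j => if j = i then 16 else 0))]
        · simp [card_PA]
        · intro y hy
          rw [mem_PA] at hy
          congr 1; ext j
          by_cases hj : j = i
          · subst hj; rcases hy.1 with h | h <;> simp [h]
          · simp [hj, hy.2 j hj]
    · · refine Finset.sum_congr rfl fun T hT => ?_
        rw [mem_planes] at hT
        rw [Finset.sum_congr rfl (g := fun _ => g (fun j => if j ∈ T then 4 else 0))]
        · simp [card_PB, hT.1]
        · intro y hy
          rw [mem_PB] at hy
          congr 1; ext j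
          by_cases hj : j ∈ T
          · rcases (hy j).1 hj with h | h <;> simp [hj, h]
          · simp [hj, (hy j).2 hj]
    · rw [Finset.sum_congr rfl (g := fun _ => g (fun _ => 1))]
      · simp [card_SC]
      · intro y hy
        rw [mem_SC] at hy
        congr 1; ext j
        rcases hy.2 j with h | h <;> simp [h]
  · intro T _ U _ hTU
    rw [Function.onFun, Finset.disjoint_left]
    intro y h1 h2
    rw [mem_PB] at h1 h2
    apply hTU
    ext j
    have := h1 j; have := h2 j
    by_cases q1 : j ∈ T <;> by_cases q2 : j ∈ U <;> simp_all
  · intro i _ j _ hij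
    rw [Function.onFun, Finset.disjoint_left]
    intro y h1 h2
    rw [mem_PA] at h1 h2
    have := h2.2 i hij
    omega

lemma card_SS : SS.card = 4320 := by
  have h := sum_SS (fun _ => 1)
  rw [Finset.sum_const, Finset.sum_const, Finset.sum_const, card_planes, Finset.card_univ,
    Fintype.card_fin] at h
  norm_num at h
  exact_mod_cast h

lemma sum_SS_triple (i j k : Fin 16) : ∑ y ∈ SS, y i ^ 2 * y j ^ 2 * y k ^ 2 =
    (if i = j ∧ i = k then 8192 else 0) + 1024 * cnt (fun T => i ∈ T ∧ j ∈ T ∧ k ∈ T) + 2048 := by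
  rw [sum_SS (fun q => q i * q j * q k)]
  congr 1
  · congr 1
    · rw [Finset.sum_congr rfl (g := fun l => if i = l then (if i = j ∧ i = k then 8192 else 0)
        else 0)]
      · simp
      · intro l _
        by_cases h1 : i = l
        · subst h1
          by_cases h2 : i = j <;> by_cases h3 : i = k <;> simp [eq_comm, h2, h3]
        · simp [h1]
    · rw [cnt, Finset.card_filter]
      push_cast
      rw [Finset.mul_sum]
      refine Finset.sum_congr rfl fun T _ => ?_
      by_cases h1 : i ∈ T <;> by_cases h2 : j ∈ T <;> by_cases h3 : k ∈ T <;> simp [h1, h2, h3]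

/-- The sixth moments of the minimal vectors. -/
lemma SS_moments (i j k : Fin 16) (hij : i ≠ j) (hik : i ≠ k) (hjk : j ≠ k) :
    ∑ y ∈ SS, y i ^ 2 * y i ^ 2 * y i ^ 2 = 46080 ∧
    ∑ y ∈ SS, y i ^ 2 * y i ^ 2 * y j ^ 2 = 9216 ∧
    ∑ y ∈ SS, y i ^ 2 * y j ^ 2 * y k ^ 2 = 3072 := by
  refine ⟨?_, ?_, ?_⟩
  · rw [sum_SS_triple, cnt_congr (Q := fun T => i ∈ T) (fun T => by tauto), cnt_single]
    simp
  · rw [sum_SS_triple, cnt_congr (Q := fun T => i ∈ T ∧ j ∈ T) (fun T => by tauto),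
      cnt_pair i j hij]
    simp [hij]
  · rw [sum_SS_triple, cnt_triple i j k hij hik hjk]
    simp [hij]

/-! ### Sign symmetries -/

/-- Change of signs in the positions of `T`. -/
def flT (T : Finset (Fin 16)) (y : Fin 16 → ℤ) : Fin 16 → ℤ := fun i => if i ∈ T then - y i else y i

lemma flT_flT (T : Finset (Fin 16)) (y : Fin 16 → ℤ) : flT T (flT T y) = y := by
  ext i; by_cases h : i ∈ T <;> simp [flT, h]

lemma flT_mem (T : Finset (Fin 16)) (hT : IsM (tw T)) (y : Fin 16 → ℤ) (hy : y ∈ SS) :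
    flT T y ∈ SS := by
  rw [mem_SS] at hy ⊢
  constructor
  · by_cases hp : 2 ∣ y 0
    · apply hy.1.congr
      intro i
      have := hy.1.1 i
      by_cases h : i ∈ T <;> simp only [flT, h, if_true, if_false] <;> omega
    · apply (hy.1.add hT).congr
      intro i
      have := hy.1.1 i
      by_cases h : i ∈ T <;> simp only [flT, tw, Pi.add_apply, h, if_true, if_false] <;> omega
  · rw [← hy.2]
    refine Finset.sum_congr rfl fun i _ => ?_
    by_cases h : i ∈ T <;> simp [flT, h]

lemma SS_odd (T : Finset (Fin 16)) (hT : IsM (tw T)) (α : Fin 16 → ℕ)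
    (ho : Odd (∑ i ∈ T, α i)) : ∑ y ∈ SS, ∏ i, y i ^ α i = 0 := by
  have h : ∑ y ∈ SS, ∏ i, y i ^ α i = ∑ y ∈ SS, - ∏ i, y i ^ α i := by
    refine Finset.sum_nbij' (flT T) (flT T) (flT_mem T hT) (flT_mem T hT)
      (fun y _ => flT_flT T y) (fun y _ => flT_flT T y) ?_
    intro y _
    have e : ∀ i, flT T y i ^ α i = (if i ∈ T then (-1) ^ α i else 1) * y i ^ α i := by
      intro i
      by_cases h : i ∈ T
      · simp only [flT, h, if_true]; rw [neg_pow]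
      · simp [flT, h]
    simp only [e]
    rw [Finset.prod_mul_distrib, Finset.prod_ite_mem, Finset.univ_inter,
      Finset.prod_pow_eq_pow_sum, ho.neg_one_pow]
    ring
  rw [Finset.sum_neg_distrib] at h
  omega

lemma odd_fin (a0 : ℕ) (h0 : a0 < 2) (a1 : ℕ) (h1 : a1 < 2) (a2 : ℕ) (h2 : a2 < 2) (a4 : ℕ)
    (h4 : a4 < 2) (a8 : ℕ) (h8 : a8 < 2) :
    a0
    + a1
    + a2
    + (a0 + a1 + a2) % 2
    + a4
    + (a0 + a1 + a4) % 2
    + (a0 + a2 + a4) % 2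
    + (a0 + a1 + (a0 + a2 + a4) % 2) % 2
    + a8
    + (a0 + a1 + a8) % 2
    + (a0 + a2 + a8) % 2
    + (a0 + a1 + (a0 + a2 + a8) % 2) % 2
    + (a0 + a4 + a8) % 2
    + (a0 + a1 + (a0 + a4 + a8) % 2) % 2
    + (a0 + a2 + (a0 + a4 + a8) % 2) % 2
    + (a0 + a1 + (a0 + a2 + (a0 + a4 + a8) % 2) % 2) % 2 ≤ 7 →
    a0 = 0 ∧ a1 = 0 ∧ a2 = 0 ∧ a4 = 0 ∧ a8 = 0 := by
  interval_cases a0 <;> interval_cases a1 <;> interval_cases a2 <;> interval_cases a4 <;>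
    interval_cases a8 <;> simp

lemma key4 {u v w x : ℕ} (hx : x < 2) (h : (u + v + w + x) % 2 = 0) : x = (u + v + w) % 2 := by
  omega

lemma odd_aux (a0 a1 a2 a3 a4 a5 a6 a7 a8 a9 a10 a11 a12 a13 a14 a15 : ℕ)
    (hs : a0 % 2 + a1 % 2 + a2 % 2 + a3 % 2 + a4 % 2 + a5 % 2 + a6 % 2 + a7 % 2 + a8 % 2
      + a9 % 2 + a10 % 2 + a11 % 2 + a12 % 2 + a13 % 2 + a14 % 2 + a15 % 2 ≤ 7)
    (h1 : (a0 % 2 + a4 % 2 + a8 % 2 + a12 % 2) % 2 = 0)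
    (h2 : (a0 % 2 + a2 % 2 + a4 % 2 + a6 % 2) % 2 = 0)
    (h3 : (a0 % 2 + a2 % 2 + a8 % 2 + a10 % 2) % 2 = 0)
    (h4 : (a0 % 2 + a2 % 2 + a12 % 2 + a14 % 2) % 2 = 0)
    (h5 : (a0 % 2 + a1 % 2 + a2 % 2 + a3 % 2) % 2 = 0)
    (h6 : (a0 % 2 + a1 % 2 + a4 % 2 + a5 % 2) % 2 = 0)
    (h7 : (a0 % 2 + a1 % 2 + a6 % 2 + a7 % 2) % 2 = 0)
    (h8 : (a0 % 2 + a1 % 2 + a8 % 2 + a9 % 2) % 2 = 0)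
    (h9 : (a0 % 2 + a1 % 2 + a10 % 2 + a11 % 2) % 2 = 0)
    (h10 : (a0 % 2 + a1 % 2 + a12 % 2 + a13 % 2) % 2 = 0)
    (h11 : (a0 % 2 + a1 % 2 + a14 % 2 + a15 % 2) % 2 = 0) :
    a0 % 2 = 0 ∧ a1 % 2 = 0 ∧ a2 % 2 = 0 ∧ a3 % 2 = 0 ∧ a4 % 2 = 0 ∧ a5 % 2 = 0 ∧ a6 % 2 = 0 ∧
    a7 % 2 = 0 ∧ a8 % 2 = 0 ∧ a9 % 2 = 0 ∧ a10 % 2 = 0 ∧ a11 % 2 = 0 ∧ a12 % 2 = 0 ∧ a13 % 2 = 0 ∧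
    a14 % 2 = 0 ∧ a15 % 2 = 0 := by
  have b : ∀ a : ℕ, a % 2 < 2 := fun a => Nat.mod_lt _ two_pos
  have k1 := key4 (b _) h1
  have k2 := key4 (b _) h2
  have k3 := key4 (b _) h3
  have k4 := key4 (b _) h4
  have k5 := key4 (b _) h5
  have k6 := key4 (b _) h6
  have k7 := key4 (b _) h7
  have k8 := key4 (b _) h8
  have k9 := key4 (b _) h9
  have k10 := key4 (b _) h10
  have k11 := key4 (b _) h11
  clear h1 h2 h3 h4 h5 h6 h7 h8 h9 h10 h11
  rw [k5, k6, k7, k8, k9, k10, k11, k2, k3, k4, k1] at hs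
  obtain ⟨z0, z1, z2, z4, z8⟩ := odd_fin _ (b a0) _ (b a1) _ (b a2) _ (b a4) _ (b a8) hs
  rw [z0, z4, z8] at k1
  rw [z0, z2, z4] at k2
  rw [z0, z2, z8] at k3
  rw [z0, z2, k1] at k4
  rw [z0, z1, z2] at k5
  rw [z0, z1, z4] at k6
  rw [z0, z1, k2] at k7
  rw [z0, z1, z8] at k8
  rw [z0, z1, k3] at k9
  rw [z0, z1, k1] at k10
  rw [z0, z1, k4] at k11
  exact ⟨z0, z1, z2, k5, z4, k6, k2, k7, z8, k8, k3, k9, k1, k10, k4, k11⟩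

/-! ### The average over the minimal vectors as a linear functional -/


/-- The normalized sum over a finite set of vectors. -/
def avgI (S : Finset (Fin 16 → ℤ)) : MvPolynomial (Fin 16) ℝ →ₗ[ℝ] ℝ :=
  (4320 : ℝ)⁻¹ • ∑ y ∈ S, (MvPolynomial.aeval (fun i => (y i : ℝ) / 4)).toLinearMap

lemma avgI_apply (S : Finset (Fin 16 → ℤ)) (p : MvPolynomial (Fin 16) ℝ) :
    avgI S p = (∑ y ∈ S, MvPolynomial.eval (fun i => (y i : ℝ) / 4) p) / 4320 := by
  simp only [avgI, LinearMap.smul_apply, LinearMap.sum_apply, AlgHom.toLinearMap_apply,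
    MvPolynomial.aeval_eq_eval, smul_eq_mul]
  rw [div_eq_inv_mul]

/-- The average over the normalized minimal vectors. -/
def ssI : MvPolynomial (Fin 16) ℝ →ₗ[ℝ] ℝ := avgI SS

lemma ssI_apply (p : MvPolynomial (Fin 16) ℝ) :
    ssI p = (∑ y ∈ SS, MvPolynomial.eval (fun i => (y i : ℝ) / 4) p) / 4320 := avgI_apply SS p

lemma ssI_one : ssI 1 = 1 := by
  rw [ssI_apply]
  simp only [map_one]
  rw [Finset.sum_const, card_SS]
  norm_num

lemma ssI_sq_sum (p : MvPolynomial (Fin 16) ℝ) :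
    ssI (p * ∑ i, MvPolynomial.X i ^ 2) = ssI p := by
  rw [ssI_apply, ssI_apply]
  congr 1
  refine Finset.sum_congr rfl fun y hy => ?_
  have h := ((mem_SS y).1 hy).2
  have h2 : ∑ i, ((y i : ℝ)) ^ 2 = 16 := by exact_mod_cast h
  simp only [map_mul, map_sum, map_pow, MvPolynomial.eval_X]
  have h3 : ∑ i, ((y i : ℝ) / 4) ^ 2 = 1 := by
    simp only [div_pow]
    rw [← Finset.sum_div, h2]; norm_num
  rw [h3, mul_one]

lemma ssI_triple (i j k : Fin 16) :
    ssI (MvPolynomial.X i ^ 2 * MvPolynomial.X j ^ 2 * MvPolynomial.X k ^ 2) =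
      ((∑ y ∈ SS, y i ^ 2 * y j ^ 2 * y k ^ 2 : ℤ) : ℝ) / (4320 * 4096) := by
  rw [ssI_apply]
  simp only [map_mul, map_pow, MvPolynomial.eval_X]
  rw [Int.cast_sum, div_mul_eq_div_div_swap]
  congr 1
  rw [Finset.sum_div]
  refine Finset.sum_congr rfl fun y _ => ?_
  push_cast
  ring

/-- Gaussian sixth moments. -/
def tau (i j k : Fin 16) : ℝ :=
  if i = j then (if i = k then 15 else 3) else if i = k then 3 else if j = k then 3 else 1

lemma tau_pos (i j k : Fin 16) : 0 < tau i j k := by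
  unfold tau
  split_ifs <;> norm_num

lemma third (i j : Fin 16) : ∃ k, i ≠ k ∧ j ≠ k := by
  revert i j; decide

lemma triple_of_moments (Λ : MvPolynomial (Fin 16) ℝ →ₗ[ℝ] ℝ) (c : ℝ)
    (h : ∀ i j k : Fin 16, i ≠ j → i ≠ k → j ≠ k →
      Λ (MvPolynomial.X i ^ 2 * MvPolynomial.X i ^ 2 * MvPolynomial.X i ^ 2) = 15 * c ∧
      Λ (MvPolynomial.X i ^ 2 * MvPolynomial.X i ^ 2 * MvPolynomial.X j ^ 2) = 3 * c ∧
      Λ (MvPolynomial.X i ^ 2 * MvPolynomial.X j ^ 2 * MvPolynomial.X k ^ 2) = c)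
    (i j k : Fin 16) :
    Λ (MvPolynomial.X i ^ 2 * MvPolynomial.X j ^ 2 * MvPolynomial.X k ^ 2) = tau i j k * c := by
  unfold tau
  have h2 : ∀ i j : Fin 16, i ≠ j →
      Λ (MvPolynomial.X i ^ 2 * MvPolynomial.X i ^ 2 * MvPolynomial.X j ^ 2) = 3 * c := by
    intro i j hij
    obtain ⟨k, hk, hk2⟩ := third i j
    exact (h i j k hij hk hk2).2.1
  by_cases hij : i = j
  · subst hij
    by_cases hik : i = k
    · subst hik
      obtain ⟨j, hj, -⟩ := third i i
      obtain ⟨k, hk, hk2⟩ := third i j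
      rw [if_pos rfl, if_pos rfl]
      exact (h i j k hj hk hk2).1
    · rw [if_pos rfl, if_neg hik]
      exact h2 i k hik
  · by_cases hik : i = k
    · subst hik
      rw [if_neg hij, if_pos rfl, mul_right_comm]
      exact h2 i j hij
    · by_cases hjk : j = k
      · subst hjk
        rw [if_neg hij, if_neg hij, if_pos rfl, mul_assoc, mul_comm]
        exact h2 j i (Ne.symm hij)
      · rw [if_neg hij, if_neg hik, if_neg hjk, one_mul]
        exact (h i j k hij hik hjk).2.2

lemma sum_of_sq (Λ : MvPolynomial (Fin 16) ℝ →ₗ[ℝ] ℝ)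
    (h : ∀ p, Λ (p * ∑ i, MvPolynomial.X i ^ 2) = Λ p) (p : MvPolynomial (Fin 16) ℝ) :
    Λ p = ∑ i, Λ (p * MvPolynomial.X i ^ 2) := by
  rw [← h p, Finset.mul_sum, map_sum]

lemma const_of_one (Λ : MvPolynomial (Fin 16) ℝ →ₗ[ℝ] ℝ) (c : ℝ) (h1 : Λ 1 = 1)
    (h : ∀ p, Λ (p * ∑ i, MvPolynomial.X i ^ 2) = Λ p)
    (ht : ∀ i j k, Λ (MvPolynomial.X i ^ 2 * MvPolynomial.X j ^ 2 * MvPolynomial.X k ^ 2)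
      = tau i j k * c) :
    (∑ i, ∑ j, ∑ k, tau i j k) * c = 1 := by
  rw [← h1, sum_of_sq Λ h 1, Finset.sum_mul]
  refine Finset.sum_congr rfl fun i _ => ?_
  rw [one_mul, sum_of_sq Λ h, Finset.sum_mul]
  refine Finset.sum_congr rfl fun j _ => ?_
  rw [sum_of_sq Λ h, Finset.sum_mul]
  refine Finset.sum_congr rfl fun k _ => ?_
  rw [ht]

lemma ssI_tau (i j k : Fin 16) :
    ssI (MvPolynomial.X i ^ 2 * MvPolynomial.X j ^ 2 * MvPolynomial.X k ^ 2) =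
      tau i j k * (3072 / (4320 * 4096)) := by
  apply triple_of_moments
  intro i j k hij hik hjk
  obtain ⟨m1, m2, m3⟩ := SS_moments i j k hij hik hjk
  rw [ssI_triple, ssI_triple, ssI_triple, m1, m2, m3]
  norm_num

lemma sphI_tau (i j k : Fin 16) :
    sphI (MvPolynomial.X i ^ 2 * MvPolynomial.X j ^ 2 * MvPolynomial.X k ^ 2) =
      tau i j k * (sphI (MvPolynomial.X 0 ^ 6) / 15) := by
  apply triple_of_moments
  intro i j k hij hik hjk
  obtain ⟨m1, m2, m3⟩ := sphI_moments i j k hij hik hjk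
  have e1 : (MvPolynomial.X i ^ 2 * MvPolynomial.X i ^ 2 * MvPolynomial.X i ^ 2 :
      MvPolynomial (Fin 16) ℝ) = MvPolynomial.X i ^ 6 := by ring
  have e2 : (MvPolynomial.X i ^ 2 * MvPolynomial.X i ^ 2 * MvPolynomial.X j ^ 2 :
      MvPolynomial (Fin 16) ℝ) = MvPolynomial.X i ^ 4 * MvPolynomial.X j ^ 2 := by ring
  rw [e1, e2]
  refine ⟨?_, ?_, ?_⟩ <;> linarith

/-- The difference of the two functionals. -/
def dI : MvPolynomial (Fin 16) ℝ →ₗ[ℝ] ℝ := ssI - sphI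

lemma dI_sq (p : MvPolynomial (Fin 16) ℝ) : dI (p * ∑ i, MvPolynomial.X i ^ 2) = dI p := by
  rw [dI, LinearMap.sub_apply, LinearMap.sub_apply, ssI_sq_sum, sphI_sq_sum]

lemma dI3 (i j k : Fin 16) :
    dI (MvPolynomial.X i ^ 2 * MvPolynomial.X j ^ 2 * MvPolynomial.X k ^ 2) = 0 := by
  have c1 := const_of_one ssI _ ssI_one ssI_sq_sum ssI_tau
  have c2 := const_of_one sphI _ sphI_one sphI_sq_sum sphI_tau
  have hp : (0 : ℝ) < ∑ i, ∑ j, ∑ k, tau i j k :=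
    Finset.sum_pos (fun i _ => Finset.sum_pos (fun j _ => Finset.sum_pos (fun k _ => tau_pos i j k)
      Finset.univ_nonempty) Finset.univ_nonempty) Finset.univ_nonempty
  have := mul_left_cancel₀ hp.ne' (c1.trans c2.symm)
  rw [dI, LinearMap.sub_apply, ssI_tau, sphI_tau, this, sub_self]

lemma dI2 (i j : Fin 16) : dI (MvPolynomial.X i ^ 2 * MvPolynomial.X j ^ 2) = 0 := by
  rw [sum_of_sq dI dI_sq]
  exact Finset.sum_eq_zero fun k _ => dI3 i j k

lemma dI1 (i : Fin 16) : dI (MvPolynomial.X i ^ 2) = 0 := by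
  rw [sum_of_sq dI dI_sq]
  exact Finset.sum_eq_zero fun k _ => dI2 i k

lemma dI0 : dI 1 = 0 := by
  rw [sum_of_sq dI dI_sq]
  exact Finset.sum_eq_zero fun k _ => by rw [one_mul]; exact dI1 k

/-- Peeling off one variable. -/
lemma peel (β : Fin 16 →₀ ℕ) (d : ℕ) (h : ∑ i, β i = d + 1) :
    ∃ i, ∃ γ : Fin 16 →₀ ℕ, ∑ i, γ i = d ∧
      MvPolynomial.monomial (2 • β) (1 : ℝ) =
        MvPolynomial.monomial (2 • γ) 1 * MvPolynomial.X i ^ 2 := by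
  have : ∃ i, β i ≠ 0 := by
    by_contra hc
    push Not at hc
    simp [hc] at h
  obtain ⟨i, hi⟩ := this
  have hle : Finsupp.single i 1 ≤ β := by
    rw [Finsupp.single_le_iff]; omega
  have e : β = (β - Finsupp.single i 1) + Finsupp.single i 1 := (tsub_add_cancel_of_le hle).symm
  refine ⟨i, β - Finsupp.single i 1, ?_, ?_⟩
  · rw [e] at h
    simp only [Finsupp.add_apply, Finset.sum_add_distrib] at h
    have s1 : ∑ x, (Finsupp.single i 1 : Fin 16 →₀ ℕ) x = 1 := by
      simp [Finsupp.single_apply]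
    omega
  · rw [MvPolynomial.X_pow_eq_monomial, MvPolynomial.monomial_mul, one_mul]
    congr 1
    conv_lhs => rw [e]
    rw [smul_add, Finsupp.smul_single]
    rfl

lemma mono_zero (β : Fin 16 →₀ ℕ) (h : ∑ i, β i = 0) :
    MvPolynomial.monomial (2 • β) (1 : ℝ) = 1 := by
  have : β = 0 := by
    ext i
    simpa using Finset.sum_eq_zero_iff.1 h i (Finset.mem_univ i)
  rw [this, smul_zero]
  rfl

lemma dI_even (β : Fin 16 →₀ ℕ) (h : ∑ i, β i ≤ 3) :
    dI (MvPolynomial.monomial (2 • β) (1 : ℝ)) = 0 := by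
  obtain h | h | h | h : ∑ i, β i = 0 ∨ ∑ i, β i = 1 ∨ ∑ i, β i = 2 ∨ ∑ i, β i = 3 := by omega
  · rw [mono_zero β h]; exact dI0
  · obtain ⟨i, γ, h1, e1⟩ := peel β 0 h
    rw [e1, mono_zero γ h1, one_mul]; exact dI1 i
  · obtain ⟨i, γ, h1, e1⟩ := peel β 1 h
    obtain ⟨j, δ, h2, e2⟩ := peel γ 0 h1
    rw [e1, e2, mono_zero δ h2, one_mul]; exact dI2 j i
  · obtain ⟨i, γ, h1, e1⟩ := peel β 2 h
    obtain ⟨j, δ, h2, e2⟩ := peel γ 1 h1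
    obtain ⟨k, η, h3, e3⟩ := peel δ 0 h2
    rw [e1, e2, e3, mono_zero η h3, one_mul]; exact dI3 k j i

lemma eval_mono (α : Fin 16 →₀ ℕ) (x : Fin 16 → ℝ) :
    MvPolynomial.eval x (MvPolynomial.monomial α 1) = ∏ i, x i ^ α i := by
  rw [MvPolynomial.eval_monomial, one_mul, Finsupp.prod_fintype]
  simp

lemma sphI_odd (α : Fin 16 →₀ ℕ) (i : Fin 16) (h : Odd (α i)) :
    sphI (MvPolynomial.monomial α 1) = 0 := by
  apply sphI_neg i
  intro x
  rw [eval_mono, eval_mono, ← Finset.mul_prod_erase _ _ (Finset.mem_univ i),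
    ← Finset.mul_prod_erase _ (fun k => x k ^ α k) (Finset.mem_univ i), if_pos rfl, h.neg_pow,
    neg_mul]
  congr 2
  refine Finset.prod_congr rfl fun j hj => ?_
  rw [if_neg (Finset.ne_of_mem_erase hj)]

lemma ssI_odd (α : Fin 16 →₀ ℕ) (T : Finset (Fin 16)) (hT : IsM (tw T))
    (ho : Odd (∑ i ∈ T, α i)) : ssI (MvPolynomial.monomial α 1) = 0 := by
  rw [ssI_apply]
  have h := SS_odd T hT α ho
  have h2 : ∑ y ∈ SS, ∏ i, ((y i : ℝ)) ^ α i = 0 := by exact_mod_cast h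
  simp only [eval_mono, div_pow, Finset.prod_div_distrib]
  rw [← Finset.sum_div, h2]
  simp

lemma ssI_odd4 (α : Fin 16 →₀ ℕ) (hne : ssI (MvPolynomial.monomial α 1) ≠ 0) (a b c d : Fin 16)
    (hT : IsM (tw {a, b, c, d})) (h1 : a ∉ ({b, c, d} : Finset (Fin 16)))
    (h2 : b ∉ ({c, d} : Finset (Fin 16))) (h3 : c ∉ ({d} : Finset (Fin 16))) :
    (α a % 2 + α b % 2 + α c % 2 + α d % 2) % 2 = 0 := by
  by_contra hc
  apply hne
  refine ssI_odd α _ hT ?_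
  rw [Finset.sum_insert h1, Finset.sum_insert h2, Finset.sum_insert h3, Finset.sum_singleton,
    Nat.odd_iff]
  omega

lemma sum_fin16 (f : Fin 16 → ℕ) : ∑ i, f i = f 0 + f 1 + f 2 + f 3 + f 4 + f 5 + f 6 + f 7 + f 8
      + f 9 + f 10 + f 11 + f 12 + f 13 + f 14 + f 15 := by
  simp only [Fin.sum_univ_succ, Finset.univ_eq_empty, Finset.sum_empty, Fin.succ_zero_eq_one,
    Fin.reduceSucc, add_zero, add_assoc]

lemma ssI_even_of_ne (α : Fin 16 →₀ ℕ) (hs : ∑ i, α i ≤ 7) (hne : ssI (MvPolynomial.monomial α 1) ≠ 0) :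
    ∀ i, α i % 2 = 0 := by
  have hs2 : ∑ i, α i % 2 ≤ 7 :=
    (Finset.sum_le_sum fun i _ => Nat.mod_le (α i) 2).trans hs
  rw [sum_fin16] at hs2
  have H := ssI_odd4 α hne
  have := odd_aux _ _ _ _ _ _ _ _ _ _ _ _ _ _ _ _ hs2
    (H 0 4 8 12 (by decide) (by decide) (by decide) (by decide))
    (H 0 2 4 6 (by decide) (by decide) (by decide) (by decide))
    (H 0 2 8 10 (by decide) (by decide) (by decide) (by decide))
    (H 0 2 12 14 (by decide) (by decide) (by decide) (by decide))
    (H 0 1 2 3 (by decide) (by decide) (by decide) (by decide))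
    (H 0 1 4 5 (by decide) (by decide) (by decide) (by decide))
    (H 0 1 6 7 (by decide) (by decide) (by decide) (by decide))
    (H 0 1 8 9 (by decide) (by decide) (by decide) (by decide))
    (H 0 1 10 11 (by decide) (by decide) (by decide) (by decide))
    (H 0 1 12 13 (by decide) (by decide) (by decide) (by decide))
    (H 0 1 14 15 (by decide) (by decide) (by decide) (by decide))
  obtain ⟨z0, z1, z2, z3, z4, z5, z6, z7, z8, z9, z10, z11, z12, z13, z14, z15⟩ := this
  intro i
  fin_cases i <;> assumption

lemma dI_mono (α : Fin 16 →₀ ℕ) (hs : ∑ i, α i ≤ 7) : dI (MvPolynomial.monomial α 1) = 0 := by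
  by_cases he : ∀ i, α i % 2 = 0
  · let β : Fin 16 →₀ ℕ := α.mapRange (fun n => n / 2) (by simp)
    have e : ∀ i, α i = 2 * β i := by
      intro i
      have := he i
      simp only [β, Finsupp.mapRange_apply]
      omega
    have e2 : α = 2 • β := by
      ext i
      rw [Finsupp.smul_apply, e i, smul_eq_mul]
    rw [e2]
    apply dI_even
    have : ∑ i, α i = 2 * ∑ i, β i := by
      rw [Finset.mul_sum]; exact Finset.sum_congr rfl fun i _ => e i
    omega
  · have h1 : ssI (MvPolynomial.monomial α 1) = 0 := by
      by_contra hne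
      exact he (ssI_even_of_ne α hs hne)
    push Not at he
    obtain ⟨i, hi⟩ := he
    rw [dI, LinearMap.sub_apply, h1, sphI_odd α i (Nat.odd_iff.2 (by omega)), sub_zero]

lemma dI_poly (p : MvPolynomial (Fin 16) ℝ) (hp : p.totalDegree ≤ 7) : dI p = 0 := by
  rw [p.as_sum, map_sum]
  refine Finset.sum_eq_zero fun α hα => ?_
  have h := (MvPolynomial.le_totalDegree hα).trans hp
  rw [Finsupp.sum_fintype _ _ (fun _ => rfl)] at h
  have e : MvPolynomial.monomial α (p.coeff α) = p.coeff α • MvPolynomial.monomial α (1 : ℝ) := by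
    rw [MvPolynomial.smul_monomial, smul_eq_mul, mul_one]
  rw [e, map_smul, dI_mono α h, smul_zero]

/-! ### The set `X18` -/

/-- The normalized vector. -/
def phi (y : Fin 16 → ℤ) : E 16 := (2 : ℝ)⁻¹ • half y

lemma phi_apply (y : Fin 16 → ℤ) (i : Fin 16) : phi y i = (y i : ℝ) / 4 := by
  rw [phi, PiLp.smul_apply, half_apply, smul_eq_mul]
  ring

lemma phi_inj : Function.Injective phi := by
  intro y z h
  ext i
  have := congrArg (fun v : E 16 => v i) h
  simp only [phi_apply] at this
  have h2 : (y i : ℝ) = z i := by linarith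
  exact_mod_cast h2

lemma norm_half (y : Fin 16 → ℤ) : ‖half y‖ ^ 2 = 4 ↔ ∑ i, y i ^ 2 = 16 := by
  rw [EuclideanSpace.real_norm_sq_eq]
  simp only [half_apply, div_pow]
  rw [← Finset.sum_div]
  have : (∑ i, (y i : ℝ) ^ 2) = ((∑ i, y i ^ 2 : ℤ) : ℝ) := by push_cast; rfl
  rw [this]
  constructor
  · intro h
    have h2 : ((∑ i, y i ^ 2 : ℤ) : ℝ) = 16 := by linarith
    exact_mod_cast h2
  · intro h
    rw [h]; norm_num

lemma X18_eq : X18 = phi '' (SS : Set (Fin 16 → ℤ)) := by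
  ext v
  simp only [X18, Set.mem_image, Set.mem_ofPred_eq, Finset.mem_coe, mem_SS]
  constructor
  · rintro ⟨x, ⟨hx, hn⟩, rfl⟩
    obtain ⟨y, hy, rfl⟩ := mem_half_of_BW16 x hx
    exact ⟨y, ⟨hy, (norm_half y).1 hn⟩, rfl⟩
  · rintro ⟨y, ⟨hy, hn⟩, rfl⟩
    exact ⟨half y, ⟨BW16_of_IsM y hy, (norm_half y).2 hn⟩, rfl⟩

lemma X18_ncard : X18.ncard = 4320 := by
  rw [X18_eq, Set.ncard_image_of_injective _ phi_inj, Set.ncard_coe_finset, card_SS]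

/-- The normalized minimal shell of `BW₁₆` lies on the unit sphere, has exactly 4320
elements, and is a spherical 7-design. -/
theorem BW16_minimal_shell_design :
    X18 ⊆ Metric.sphere (0 : E 16) 1 ∧ X18.Finite ∧ X18.ncard = 4320 ∧
    IsSphericalDesign X18 7 := by
  refine ⟨?_, ?_, X18_ncard, ?_⟩
  · rintro v ⟨x, ⟨-, hn⟩, rfl⟩
    rw [mem_sphere_zero_iff_norm, norm_smul]
    have h2 : ‖x‖ = 2 := by
      have := norm_nonneg x
      nlinarith
    rw [h2]; norm_num
  · rw [X18_eq]
    exact (Finset.finite_toSet SS).image phi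
  · intro p hp
    have h := dI_poly p hp
    rw [dI, LinearMap.sub_apply, sub_eq_zero, sphI_apply, ssI_apply] at h
    rw [X18_ncard, X18_eq, finsum_mem_image phi_inj.injOn, finsum_mem_coe_finset, ← h]
    simp only [phi_apply]
    norm_num
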